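/- Let A be an n×n matrix, V an n×k matrix with orthonormal columns, θ ∈ C, y a unit vector with (θ, Vy) a Ritz pair, and w := (I - yy*)z a solution of the least squares normal equations. Let τ be the scalar such that s := y + τw minimizes ‖(A - θI)Vs‖²/‖s‖² over span{y, w}. Then ‖(A - θI)Vs‖²/‖s‖² = ‖(A - θI)Vy‖² - τ‖(A - θI)Vw‖². -/

import Mathlib

open Matrix
open scoped ComplexConjugate

/-- Squared Euclidean norm of a complex vector. -/
noncomputable def nsq {k : ℕ} (x : Fin k → ℂ) : ℝ := ∑ i, ‖x i‖ ^ 2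

/-- Standard Hermitian inner product (conjugate-linear in the first argument). -/
noncomputable def cip {k : ℕ} (x y : Fin k → ℂ) : ℂ := ∑ i, conj (x i) * y i

/-- Orthogonal projection `(I - yy*) v`. -/
noncomputable def proj {k : ℕ} (y v : Fin k → ℂ) : Fin k → ℂ := v - cip y v • y

/-!
A minimiser `s` of the Rayleigh quotient `‖T x‖² / ‖x‖²` over a subspace, with minimum `μ`,
satisfies the Galerkin condition `⟪T d, T s⟫ = μ ⟪d, s⟫` for every direction `d` in the subspace.
For `s = y + τ w` test it with `d = y`: since `‖y‖ = 1` and `w ⟂ y`, the right side is `μ`, while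
the normal equations turn the left side into `‖T y‖² + τ ⟪T y, T w⟫ = ‖T y‖² - τ ‖T w‖²`.
-/

open WithLp (toLp)
open scoped InnerProductSpace

section InnerProductSpace

variable {𝕜 E F : Type*} [RCLike 𝕜] [SeminormedAddCommGroup F] [InnerProductSpace 𝕜 F]

section Seminormed

variable [SeminormedAddCommGroup E] [InnerProductSpace 𝕜 E]

theorem norm_add_ofReal_smul_sq (x y : E) (t : ℝ) :
    ‖x + (t : 𝕜) • y‖ ^ 2 = ‖x‖ ^ 2 + 2 * t * RCLike.re ⟪y, x⟫_𝕜 + t ^ 2 * ‖y‖ ^ 2 := by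
  rw [norm_add_sq (𝕜 := 𝕜), inner_smul_right, RCLike.re_ofReal_mul, inner_re_symm, norm_smul,
    RCLike.norm_ofReal, mul_pow, sq_abs]
  ring

theorem re_inner_map_map_eq_mul_re_inner {T : E →ₗ[𝕜] F} {μ : ℝ} {s d : E}
    (hle : ∀ t : ℝ, μ * ‖s + (t : 𝕜) • d‖ ^ 2 ≤ ‖T (s + (t : 𝕜) • d)‖ ^ 2)
    (hs : ‖T s‖ ^ 2 = μ * ‖s‖ ^ 2) :
    RCLike.re ⟪T d, T s⟫_𝕜 = μ * RCLike.re ⟪d, s⟫_𝕜 := by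
  set slope := RCLike.re ⟪T d, T s⟫_𝕜 - μ * RCLike.re ⟪d, s⟫_𝕜 with hslope
  have hquad (t : ℝ) : 0 ≤ (‖T d‖ ^ 2 - μ * ‖d‖ ^ 2) * (t * t) + 2 * slope * t + 0 := by
    have h := hle t
    rw [map_add, map_smul, norm_add_ofReal_smul_sq, norm_add_ofReal_smul_sq] at h
    linear_combination h + hs + 2 * t * hslope
  have hdiscrim : (2 * slope) ^ 2 ≤ 0 := by
    simpa only [discrim, mul_zero, sub_zero] using discrim_le_zero hquad
  have hslope_zero : slope = 0 := by nlinarith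
  exact sub_eq_zero.1 hslope_zero

theorem inner_map_map_eq_mul_inner {T : E →ₗ[𝕜] F} {μ : ℝ} {s d : E}
    (hle : ∀ a : 𝕜, μ * ‖s + a • d‖ ^ 2 ≤ ‖T (s + a • d)‖ ^ 2)
    (hs : ‖T s‖ ^ 2 = μ * ‖s‖ ^ 2) :
    ⟪T d, T s⟫_𝕜 = μ * ⟪d, s⟫_𝕜 := by
  set c : 𝕜 := ⟪T d, T s⟫_𝕜 - μ * ⟪d, s⟫_𝕜
  -- In the direction `c • d` the first-order term of `‖T x‖ ^ 2 - μ * ‖x‖ ^ 2` is `2 * ‖c‖ ^ 2`.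
  have hre : RCLike.re ⟪T (c • d), T s⟫_𝕜 = μ * RCLike.re ⟪c • d, s⟫_𝕜 :=
    re_inner_map_map_eq_mul_re_inner (fun t ↦ by simpa only [smul_smul] using hle (t * c)) hs
  have hnorm : ‖c‖ ^ 2 = 0 := by
    calc ‖c‖ ^ 2 = RCLike.re (conj c * c) := by
          rw [RCLike.conj_mul, ← RCLike.ofReal_pow, RCLike.ofReal_re]
      _ = RCLike.re ⟪T (c • d), T s⟫_𝕜 - μ * RCLike.re ⟪c • d, s⟫_𝕜 := by
          rw [map_smul, inner_smul_left, inner_smul_left, ← RCLike.re_ofReal_mul, ← map_sub,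
            mul_left_comm, ← mul_sub]
      _ = 0 := sub_eq_zero.2 hre
  exact sub_eq_zero.1 (norm_eq_zero.1 (pow_eq_zero_iff two_ne_zero |>.1 hnorm))

end Seminormed

theorem inner_map_map_eq_div_mul_inner_of_div_le [NormedAddCommGroup E] [InnerProductSpace 𝕜 E]
    {T : E →ₗ[𝕜] F} {s d : E}
    (hmin : ∀ a : 𝕜, s + a • d ≠ 0 →
      ‖T s‖ ^ 2 / ‖s‖ ^ 2 ≤ ‖T (s + a • d)‖ ^ 2 / ‖s + a • d‖ ^ 2) :
    ⟪T d, T s⟫_𝕜 = (‖T s‖ ^ 2 / ‖s‖ ^ 2 : ℝ) * ⟪d, s⟫_𝕜 := by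
  refine inner_map_map_eq_mul_inner (fun a ↦ ?_) ?_
  · rcases eq_or_ne (s + a • d) 0 with h | h
    · simp [h]
    · exact (le_div_iff₀ (by positivity)).1 (hmin a h)
  · rw [div_mul_cancel_of_imp]
    simp +contextual

end InnerProductSpace

section EuclideanSpace

variable {𝕜 l m n : Type*} [RCLike 𝕜] [Fintype m] [Fintype n] [DecidableEq n]

theorem toLp_mulVec_mulVec (B : Matrix l m 𝕜) (C : Matrix m n 𝕜) (x : n → 𝕜) :
    toLp 2 (B *ᵥ C *ᵥ x) = (B * C).toEuclideanLin (toLp 2 x) := by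
  rw [mulVec_mulVec, toLpLin_toLp, toLin'_apply]

theorem inner_toLp_conjTranspose_mul_self_mulVec (C : Matrix m n 𝕜) (x v : n → 𝕜) :
    ⟪toLp 2 x, toLp 2 ((Cᴴ * C) *ᵥ v)⟫_𝕜 =
      ⟪C.toEuclideanLin (toLp 2 x), C.toEuclideanLin (toLp 2 v)⟫_𝕜 := by
  classical
  rw [← LinearMap.adjoint_inner_right, ← toEuclideanLin_conjTranspose_eq_adjoint]
  simp

end EuclideanSpace

section Coordinates

variable {k m : ℕ}

theorem nsq_eq_norm_toLp_sq (x : Fin k → ℂ) : nsq x = ‖toLp 2 x‖ ^ 2 :=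
  (EuclideanSpace.norm_sq_eq _).symm

theorem cip_eq_inner_toLp (x y : Fin k → ℂ) : cip x y = ⟪toLp 2 x, toLp 2 y⟫_ℂ := by
  simp [cip, EuclideanSpace.inner_toLp_toLp, dotProduct, mul_comm]

theorem toLp_proj (y v : Fin k → ℂ) :
    toLp 2 (proj y v) = toLp 2 v - ⟪toLp 2 y, toLp 2 v⟫_ℂ • toLp 2 y := by
  rw [proj, cip_eq_inner_toLp, WithLp.toLp_sub, WithLp.toLp_smul]

theorem norm_toLp_eq_one_iff {x : Fin k → ℂ} : ‖toLp 2 x‖ = 1 ↔ nsq x = 1 := by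
  rw [nsq_eq_norm_toLp_sq, pow_eq_one_iff_of_nonneg (norm_nonneg _) two_ne_zero]

theorem inner_toLp_proj_self {y : Fin k → ℂ} (hy : nsq y = 1) (z : Fin k → ℂ) :
    ⟪toLp 2 y, toLp 2 (proj y z)⟫_ℂ = 0 := by
  rw [toLp_proj, inner_sub_right, inner_smul_right, inner_self_eq_norm_sq_to_K,
    norm_toLp_eq_one_iff.2 hy]
  simp

theorem inner_toLp_proj_of_inner_eq_zero {y w : Fin k → ℂ}
    (hyw : ⟪toLp 2 y, toLp 2 w⟫_ℂ = 0) (v : Fin k → ℂ) :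
    ⟪toLp 2 w, toLp 2 (proj y v)⟫_ℂ = ⟪toLp 2 w, toLp 2 v⟫_ℂ := by
  rw [toLp_proj, inner_sub_right, inner_smul_right, inner_eq_zero_symm.1 hyw, mul_zero, sub_zero]

theorem inner_toEuclideanLin_add_eq_zero {C : Matrix (Fin m) (Fin k) ℂ} {y w : Fin k → ℂ}
    (hyw : ⟪toLp 2 y, toLp 2 w⟫_ℂ = 0)
    (hnormal : proj y ((Cᴴ * C) *ᵥ w) = -proj y ((Cᴴ * C) *ᵥ y)) :
    ⟪C.toEuclideanLin (toLp 2 w), C.toEuclideanLin (toLp 2 y + toLp 2 w)⟫_ℂ = 0 := by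
  have h := congr(⟪toLp 2 w, toLp 2 $hnormal⟫_ℂ)
  rw [WithLp.toLp_neg, inner_neg_right] at h
  simp only [inner_toLp_proj_of_inner_eq_zero hyw,
    inner_toLp_conjTranspose_mul_self_mulVec] at h
  rw [map_add, inner_add_right, h, add_neg_cancel]

end Coordinates

theorem stmt6_general {𝕜 E F : Type*} [RCLike 𝕜] [NormedAddCommGroup E] [InnerProductSpace 𝕜 E]
    [SeminormedAddCommGroup F] [InnerProductSpace 𝕜 F] {T : E →ₗ[𝕜] F} {y w : E}
    (hy : ‖y‖ = 1) (hyw : ⟪y, w⟫_𝕜 = 0)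
    (hnormal : ⟪T w, T (y + w)⟫_𝕜 = 0) {τ : 𝕜}
    (hmin : ∀ a b : 𝕜, a • y + b • w ≠ 0 →
      ‖T (y + τ • w)‖ ^ 2 / ‖y + τ • w‖ ^ 2 ≤ ‖T (a • y + b • w)‖ ^ 2 / ‖a • y + b • w‖ ^ 2) :
    ((‖T (y + τ • w)‖ ^ 2 / ‖y + τ • w‖ ^ 2 : ℝ) : 𝕜) = ‖T y‖ ^ 2 - τ * ‖T w‖ ^ 2 := by
  have hys : ⟪y, y + τ • w⟫_𝕜 = 1 := by
    simp [inner_add_right, inner_smul_right, hyw, hy]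
  have hTyTw : ⟪T y, T w⟫_𝕜 = -‖T w‖ ^ 2 := by
    rw [map_add, inner_add_right, inner_self_eq_norm_sq_to_K] at hnormal
    simpa using congr(star $(eq_neg_of_add_eq_zero_left hnormal))
  have hgalerkin : ⟪T y, T (y + τ • w)⟫_𝕜 =
      (‖T (y + τ • w)‖ ^ 2 / ‖y + τ • w‖ ^ 2 : ℝ) * ⟪y, y + τ • w⟫_𝕜 := by
    refine inner_map_map_eq_div_mul_inner_of_div_le fun a h ↦ ?_
    have hline : y + τ • w + a • y = (1 + a) • y + τ • w := by module
    rw [hline] at h ⊢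
    exact hmin _ _ h
  calc ((‖T (y + τ • w)‖ ^ 2 / ‖y + τ • w‖ ^ 2 : ℝ) : 𝕜)
      = ⟪T y, T (y + τ • w)⟫_𝕜 := by rw [hgalerkin, hys, mul_one]
    _ = ⟪T y, T y⟫_𝕜 + τ * ⟪T y, T w⟫_𝕜 := by
      rw [map_add, map_smul, inner_add_right, inner_smul_right]
    _ = ‖T y‖ ^ 2 - τ * ‖T w‖ ^ 2 := by
      rw [inner_self_eq_norm_sq_to_K, hTyTw]; ring

theorem stmt6 {n k : ℕ} (A : Matrix (Fin n) (Fin n) ℂ) (V : Matrix (Fin n) (Fin k) ℂ)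
    (θ : ℂ) (y z : Fin k → ℂ)
    (hV : Vᴴ * V = 1) (hy : nsq y = 1)
    (hRitz : (Vᴴ * ((A - θ • 1) * V)).mulVec y = 0)
    (M : Matrix (Fin k) (Fin k) ℂ)
    (hM : M = Vᴴ * (A - θ • 1)ᴴ * ((A - θ • 1) * V))
    (w : Fin k → ℂ) (hw : w = proj y z)
    (hne : proj y (M.mulVec w) = -(proj y (M.mulVec y)))
    (τ : ℝ) (s : Fin k → ℂ) (hs : s = y + (τ : ℂ) • w)
    (hmin : ∀ a b : ℂ, a • y + b • w ≠ 0 →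
      nsq ((A - θ • 1).mulVec (V.mulVec s)) / nsq s
        ≤ nsq ((A - θ • 1).mulVec (V.mulVec (a • y + b • w))) / nsq (a • y + b • w))
 :
    nsq ((A - θ • 1).mulVec (V.mulVec s)) / nsq s
      = nsq ((A - θ • 1).mulVec (V.mulVec y)) - τ * nsq ((A - θ • 1).mulVec (V.mulVec w)) := by
  subst hM hw hs
  rw [← conjTranspose_mul] at hne
  simp only [nsq_eq_norm_toLp_sq, toLp_mulVec_mulVec, WithLp.toLp_add, WithLp.toLp_smul] at hmin ⊢
  have hyw := inner_toLp_proj_self hy z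
  apply Complex.ofReal_injective
  simpa using stmt6_general (norm_toLp_eq_one_iff.2 hy) hyw
    (inner_toEuclideanLin_add_eq_zero hyw hne)
    fun a b h ↦ hmin a b (mt (congrArg (toLp 2)) h)
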